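/- Let R > 0 and let the test measures μ_t^{σ,ε} be as in the circle setup. Then for every δ ∈ (0, πR] and all σ, ε > 0 with max(σ, ε) ≤ δ/2 and σ < R, one has the exact identity W₁(μ_0^{σ,ε}, μ_δ^{σ,ε}) = 2R²·sin(δ/(2R))·(1/ε)·sin(ε/R)·(1 + σ²/(3R²)); equivalently, writing x₀ = Φ(0, 0) = (R, 0) and y = Φ(δ, 0) = (R·cos(δ/R), R·sin(δ/R)), W₁(μ_0^{σ,ε}, μ_δ^{σ,ε}) = ‖x₀ − y‖·(R/ε)·sin(ε/R)·(1 + σ²/(3R²)). -/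

import Mathlib

open MeasureTheory Set

/-- The 1-Wasserstein distance: infimum over couplings of the integral of the distance. -/
noncomputable def W1 {X : Type*} [MeasurableSpace X] [PseudoMetricSpace X]
    (μ ν : Measure X) : ℝ :=
  sInf { c : ℝ | ∃ π : Measure (X × X), IsProbabilityMeasure π ∧
      π.map Prod.fst = μ ∧ π.map Prod.snd = ν ∧ c = ∫ p, dist p.1 p.2 ∂π }

/-- Restriction of the ambient volume measure to a set, normalized to a probability measure. -/
noncomputable def normRestrict {X : Type*} [MeasureSpace X] (s : Set X) : Measure X :=
  (volume s)⁻¹ • volume.restrict s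

/-!
The reflection across the bisector of the two sectors carries one test measure to the other. Let
`n` be the unit normal of the bisector, pointing to the side of the first sector. Every point `z` of
that sector is moved by `2 ⟪n, z⟫` in the direction `-n`, which is exactly the decrease of the
1-Lipschitz function `⟪n, ·⟫`. By weak Kantorovich duality the reflection is therefore an optimal
transport map, and the distance is the mean of `2 ⟪n, z⟫`, an elementary integral in polar
coordinates.
-/

open scoped InnerProductSpace

section Kantorovich

variable {X : Type*} [MeasurableSpace X] [PseudoMetricSpace X] {μ ν : Measure X} {g : X → ℝ}
  {x₀ : X}

lemma integrable_of_lipschitzWith [OpensMeasurableSpace X] [IsFiniteMeasure μ] {K : NNReal}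
    (hg : LipschitzWith K g) (hμ : Integrable (dist · x₀) μ) : Integrable g μ := by
  refine ((integrable_const |g x₀|).add (hμ.const_mul K)).mono'
    hg.continuous.measurable.aestronglyMeasurable (.of_forall fun x ↦ ?_)
  calc |g x| ≤ |g x₀| + |g x - g x₀| := by
        simpa using abs_add_le (g x₀) (g x - g x₀)
    _ ≤ |g x₀| + K * dist x x₀ := by gcongr; exact hg.dist_le_mul x x₀

variable [OpensMeasurableSpace X] [SecondCountableTopology X]

lemma integrable_dist_of_marginals {π : Measure (X × X)}
    (hfst : Integrable (dist · x₀) (π.map Prod.fst))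
    (hsnd : Integrable (dist · x₀) (π.map Prod.snd)) :
    Integrable (fun p ↦ dist p.1 p.2) π := by
  refine ((hfst.comp_measurable measurable_fst).add (hsnd.comp_measurable measurable_snd)).mono'
    (by fun_prop) (.of_forall fun p ↦ ?_)
  simpa [abs_of_nonneg] using dist_triangle_right p.1 p.2 x₀

lemma integral_snd_sub_integral_fst_le_integral_dist {π : Measure (X × X)} [IsFiniteMeasure π]
    (hg : LipschitzWith 1 g) (hfst : Integrable (dist · x₀) (π.map Prod.fst))
    (hsnd : Integrable (dist · x₀) (π.map Prod.snd)) :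
    ∫ x, g x ∂π.map Prod.snd - ∫ x, g x ∂π.map Prod.fst ≤ ∫ p, dist p.1 p.2 ∂π := by
  have hgm : Measurable g := hg.continuous.measurable
  have hg₁ : Integrable (fun p : X × X ↦ g p.1) π :=
    (integrable_of_lipschitzWith hg hfst).comp_measurable measurable_fst
  have hg₂ : Integrable (fun p : X × X ↦ g p.2) π :=
    (integrable_of_lipschitzWith hg hsnd).comp_measurable measurable_snd
  rw [integral_map measurable_fst.aemeasurable hgm.aestronglyMeasurable,
    integral_map measurable_snd.aemeasurable hgm.aestronglyMeasurable, ← integral_sub hg₂ hg₁]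
  refine integral_mono (hg₂.sub hg₁) (integrable_dist_of_marginals hfst hsnd) fun p ↦ ?_
  calc g p.2 - g p.1 ≤ dist (g p.2) (g p.1) := le_abs_self _
    _ ≤ dist p.1 p.2 := by simpa [dist_comm] using hg.dist_le_mul p.2 p.1

theorem integral_sub_integral_le_W1 [IsProbabilityMeasure μ] [IsProbabilityMeasure ν]
    (hg : LipschitzWith 1 g) (hμ : Integrable (dist · x₀) μ) (hν : Integrable (dist · x₀) ν) :
    ∫ x, g x ∂ν - ∫ x, g x ∂μ ≤ W1 μ ν := by
  refine le_csInf ⟨_, μ.prod ν, inferInstance, by simp, by simp, rfl⟩ ?_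
  rintro _ ⟨π, _, rfl, rfl, rfl⟩
  exact integral_snd_sub_integral_fst_le_integral_dist hg hμ hν

theorem W1_map_le_integral_dist [IsProbabilityMeasure μ] {T : X → X} (hT : Measurable T) :
    W1 μ (μ.map T) ≤ ∫ x, dist x (T x) ∂μ := by
  have hgraph : Measurable fun x ↦ (x, T x) := by fun_prop
  refine csInf_le ⟨0, ?_⟩ ⟨μ.map fun x ↦ (x, T x),
    Measure.isProbabilityMeasure_map hgraph.aemeasurable, ?_, ?_, ?_⟩
  · rintro _ ⟨π, -, -, -, rfl⟩
    positivity
  · rw [Measure.map_map measurable_fst hgraph]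
    exact Measure.map_id
  · rw [Measure.map_map measurable_snd hgraph]
    rfl
  · rw [integral_map hgraph.aemeasurable (by fun_prop)]

theorem W1_map_eq_integral_dist [IsProbabilityMeasure μ] {T : X → X} (hT : Measurable T)
    (hg : LipschitzWith 1 g) (hμ : Integrable (dist · x₀) μ)
    (hν : Integrable (dist · x₀) (μ.map T)) (hgT : ∀ᵐ x ∂μ, dist x (T x) = g (T x) - g x) :
    W1 μ (μ.map T) = ∫ x, dist x (T x) ∂μ := by
  have := Measure.isProbabilityMeasure_map (μ := μ) hT.aemeasurable
  have hgν : Integrable g (μ.map T) := integrable_of_lipschitzWith hg hν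
  refine (W1_map_le_integral_dist hT).antisymm ?_
  calc ∫ x, dist x (T x) ∂μ = ∫ x, (g (T x) - g x) ∂μ := integral_congr_ae hgT
    _ = ∫ x, g x ∂μ.map T - ∫ x, g x ∂μ := by
      rw [integral_map hT.aemeasurable hgν.aestronglyMeasurable]
      exact integral_sub (hgν.comp_measurable hT) (integrable_of_lipschitzWith hg hμ)
    _ ≤ W1 μ (μ.map T) := integral_sub_integral_le_W1 hg hμ hν

end Kantorovich

section Reflection

variable {E : Type*} [NormedAddCommGroup E] [InnerProductSpace ℝ E] {n : E}

lemma reflection_orthogonal_singleton_apply (hn : ‖n‖ = 1) (z : E) :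
    (ℝ ∙ n)ᗮ.reflection z = z - (2 * ⟪n, z⟫_ℝ) • n := by
  simp [Submodule.reflection_orthogonal_apply, Submodule.reflection_singleton_apply, hn,
    two_smul, two_mul, add_smul]

lemma lipschitzWith_neg_inner (hn : ‖n‖ = 1) : LipschitzWith 1 fun z ↦ -⟪n, z⟫_ℝ := by
  refine LipschitzWith.of_dist_le_mul fun x y ↦ ?_
  rw [dist_neg_neg, Real.dist_eq, ← inner_sub_right, dist_eq_norm]
  simpa [hn] using abs_real_inner_le_norm n (x - y)

theorem W1_map_reflection [MeasurableSpace E] [BorelSpace E] [SecondCountableTopology E]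
    {μ : Measure E} [IsProbabilityMeasure μ] (hn : ‖n‖ = 1) (hμ : Integrable (fun z ↦ ‖z‖) μ)
    (hpos : ∀ᵐ z ∂μ, 0 ≤ ⟪n, z⟫_ℝ) :
    W1 μ (μ.map (ℝ ∙ n)ᗮ.reflection) = 2 * ∫ z, ⟪n, z⟫_ℝ ∂μ := by
  set T := (ℝ ∙ n)ᗮ.reflection
  have hT : Measurable T := T.continuous.measurable
  have hdist : ∀ᵐ z ∂μ, dist z (T z) = 2 * ⟪n, z⟫_ℝ := by
    filter_upwards [hpos] with z hz
    rw [reflection_orthogonal_singleton_apply hn, dist_self_sub_right, norm_smul, hn, mul_one,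
      Real.norm_of_nonneg (by positivity)]
  have hinner (z : E) : ⟪n, T z⟫_ℝ = -⟪n, z⟫_ℝ := by
    rw [reflection_orthogonal_singleton_apply hn, inner_sub_right, inner_smul_right,
      real_inner_self_eq_norm_sq, hn]
    ring
  have hν : Integrable (fun z ↦ ‖z‖) (μ.map T) := by
    rw [integrable_map_measure (by fun_prop) hT.aemeasurable]
    simpa [Function.comp_def] using hμ
  rw [W1_map_eq_integral_dist (x₀ := 0) hT (lipschitzWith_neg_inner hn) (by simpa using hμ)
    (by simpa using hν), integral_congr_ae hdist, integral_const_mul]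
  filter_upwards [hdist] with z hz
  rw [hz, hinner]
  ring

end Reflection

section NormRestrict

variable {X Y : Type*} [MeasureSpace X] [MeasureSpace Y] {s : Set X}

lemma isProbabilityMeasure_normRestrict (h₀ : volume s ≠ 0) (h : volume s ≠ ⊤) :
    IsProbabilityMeasure (normRestrict s) :=
  ProbabilityTheory.cond_isProbabilityMeasure_of_finite h₀ h

lemma ae_mem_normRestrict (hs : MeasurableSet s) : ∀ᵐ x ∂normRestrict s, x ∈ s :=
  ProbabilityTheory.ae_cond_mem hs

lemma integral_normRestrict {F : Type*} [NormedAddCommGroup F] [NormedSpace ℝ F] (f : X → F) :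
    ∫ x, f x ∂normRestrict s = (volume.real s)⁻¹ • ∫ x in s, f x := by
  rw [normRestrict, integral_smul_measure, ENNReal.toReal_inv, Measure.real]

lemma normRestrict_image {e : X → Y} (he : MeasurePreserving e) (hemb : MeasurableEmbedding e) :
    normRestrict (e '' s) = (normRestrict s).map e := by
  have hvol : volume (e '' s) = volume s := by
    rw [← he.measure_preimage_emb hemb, preimage_image_eq s hemb.injective]
  rw [normRestrict, normRestrict, hvol, Measure.map_smul, (he.restrict_image_emb hemb s).map_eq]

lemma integrable_norm_normRestrict {E : Type*} [NormedAddCommGroup E] [MeasureSpace E]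
    [OpensMeasurableSpace E] {s : Set E} [IsFiniteMeasure (normRestrict s)]
    (hs : MeasurableSet s) (hb : Bornology.IsBounded s) :
    Integrable (fun z ↦ ‖z‖) (normRestrict s) := by
  obtain ⟨C, hC⟩ := hb.exists_norm_le
  exact .of_bound measurable_norm.aestronglyMeasurable C
    ((ae_mem_normRestrict hs).mono fun z hz ↦ by simpa using hC z hz)

end NormRestrict

section PolarCoordinates

/-- The point of the Euclidean plane with polar coordinates `p = (r, φ)`. Unlike `polarCoord.symm`
it takes values in the inner product space `EuclideanSpace ℝ (Fin 2)`. -/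
noncomputable def polarVec (p : ℝ × ℝ) : EuclideanSpace ℝ (Fin 2) :=
  !₂[p.1 * Real.cos p.2, p.1 * Real.sin p.2]

lemma polarVec_apply_zero (p : ℝ × ℝ) : polarVec p 0 = p.1 * Real.cos p.2 := rfl

lemma polarVec_apply_one (p : ℝ × ℝ) : polarVec p 1 = p.1 * Real.sin p.2 := rfl

lemma inner_polarVec (p q : ℝ × ℝ) :
    ⟪polarVec p, polarVec q⟫_ℝ = p.1 * q.1 * Real.cos (p.2 - q.2) := by
  simp only [PiLp.inner_apply, Real.inner_apply, Fin.sum_univ_two, polarVec_apply_zero,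
    polarVec_apply_one, Real.cos_sub]
  ring

lemma norm_polarVec (p : ℝ × ℝ) : ‖polarVec p‖ = |p.1| := by
  rw [norm_eq_sqrt_real_inner, inner_polarVec, sub_self, Real.cos_zero, mul_one,
    Real.sqrt_mul_self_eq_abs]

lemma norm_polarVec_sub_polarVec (r φ ψ : ℝ) :
    ‖polarVec (r, φ) - polarVec (r, ψ)‖ = 2 * |r| * |Real.sin ((ψ - φ) / 2)| := by
  rw [← sq_eq_sq₀ (norm_nonneg _) (by positivity), norm_sub_sq_real, norm_polarVec, norm_polarVec,
    inner_polarVec, mul_pow, mul_pow, sq_abs, sq_abs, Real.sin_sq_eq_half_sub,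
    mul_div_cancel₀ _ two_ne_zero, Real.cos_sub, Real.cos_sub]
  ring

lemma continuous_polarVec : Continuous polarVec := by
  unfold polarVec
  fun_prop

lemma injOn_polarVec {D : Set (ℝ × ℝ)} (hr : ∀ p ∈ D, 0 < p.1)
    (hφ : ∀ p ∈ D, ∀ q ∈ D, p.2 - q.2 < 2 * Real.pi) : InjOn polarVec D := by
  intro p hp q hq hpq
  have hfst : p.1 = q.1 := by
    simpa [norm_polarVec, abs_of_pos (hr p hp), abs_of_pos (hr q hq)] using congrArg norm hpq
  have hcos : Real.cos (p.2 - q.2) = 1 := by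
    have hinner : p.1 * q.1 * Real.cos (p.2 - q.2) = q.1 * q.1 := by
      rw [← inner_polarVec, hpq, real_inner_self_eq_norm_mul_norm, norm_polarVec,
        abs_mul_abs_self]
    rw [hfst] at hinner
    exact mul_left_cancel₀ (mul_pos (hr q hq) (hr q hq)).ne' (hinner.trans (mul_one _).symm)
  have hsnd : p.2 - q.2 = 0 :=
    (Real.cos_eq_one_iff_of_lt_of_lt (by linarith [hφ q hq p hp]) (hφ p hp q hq)).1 hcos
  exact Prod.ext hfst (sub_eq_zero.1 hsnd)

/-- The identification of the measure spaces `ℝ × ℝ` and `EuclideanSpace ℝ (Fin 2)`, used to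
transport the polar change of variables, which Mathlib states on `ℝ × ℝ`. -/
noncomputable def prodMeasurableEquivEuclidean : ℝ × ℝ ≃ᵐ EuclideanSpace ℝ (Fin 2) :=
  MeasurableEquiv.finTwoArrow.symm.trans (MeasurableEquiv.toLp 2 (Fin 2 → ℝ))

lemma measurePreserving_prodMeasurableEquivEuclidean :
    MeasurePreserving prodMeasurableEquivEuclidean :=
  (PiLp.volume_preserving_toLp (Fin 2)).comp ((volume_preserving_finTwoArrow ℝ).symm _)

lemma prodMeasurableEquivEuclidean_polarCoord_symm (p : ℝ × ℝ) :
    prodMeasurableEquivEuclidean (polarCoord.symm p) = polarVec p := by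
  ext i
  fin_cases i <;> rfl

theorem setIntegral_polarVec_image {F : Type*} [NormedAddCommGroup F] [NormedSpace ℝ F]
    {D : Set (ℝ × ℝ)} (hD : MeasurableSet D) (hinj : InjOn polarVec D)
    (f : EuclideanSpace ℝ (Fin 2) → F) :
    ∫ z in polarVec '' D, f z = ∫ p in D, |p.1| • f (polarVec p) := by
  have hcomp : polarVec = prodMeasurableEquivEuclidean ∘ polarCoord.symm :=
    funext fun p ↦ (prodMeasurableEquivEuclidean_polarCoord_symm p).symm
  have hinj' : InjOn polarCoord.symm D := InjOn.of_comp (hcomp ▸ hinj)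
  rw [hcomp, image_comp, measurePreserving_prodMeasurableEquivEuclidean.setIntegral_image_emb
      prodMeasurableEquivEuclidean.measurableEmbedding,
    integral_image_eq_integral_abs_det_fderiv_smul volume hD
      (fun p _ ↦ (hasFDerivAt_polarCoord_symm p).hasFDerivWithinAt) hinj']
  simp only [det_fderivPolarCoordSymm, Function.comp_apply]

end PolarCoordinates

section AnnularSector

/-- The open annular sector of points with radius in `(a, b)` and polar angle in `(s, t)`. -/
def annularSector (a b s t : ℝ) : Set (EuclideanSpace ℝ (Fin 2)) :=
  polarVec '' (Ioo a b ×ˢ Ioo s t)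

variable {a b s t : ℝ}

lemma isBounded_annularSector (a b s t : ℝ) : Bornology.IsBounded (annularSector a b s t) :=
  ((isCompact_Icc.prod isCompact_Icc).image continuous_polarVec).isBounded.subset <|
    image_mono <| prod_mono Ioo_subset_Icc_self Ioo_subset_Icc_self

lemma injOn_polarVec_Ioo_prod_Ioo (ha : 0 ≤ a) (hst : t - s ≤ 2 * Real.pi) :
    InjOn polarVec (Ioo a b ×ˢ Ioo s t) :=
  injOn_polarVec (fun _ hp ↦ ha.trans_lt hp.1.1)
    fun _ hp _ hq ↦ by linarith [hp.2.2, hq.2.1]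

lemma measurableSet_annularSector (ha : 0 ≤ a) (hst : t - s ≤ 2 * Real.pi) :
    MeasurableSet (annularSector a b s t) :=
  (measurableSet_Ioo.prod measurableSet_Ioo).image_of_continuousOn_injOn
    continuous_polarVec.continuousOn (injOn_polarVec_Ioo_prod_Ioo ha hst)

lemma setIntegral_annularSector_of_eq_mul {f : EuclideanSpace ℝ (Fin 2) → ℝ} {g h : ℝ → ℝ}
    (ha : 0 ≤ a) (hab : a ≤ b) (hst : s ≤ t) (hst' : t - s ≤ 2 * Real.pi)
    (hf : ∀ r φ, f (polarVec (r, φ)) = g r * h φ) :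
    ∫ z in annularSector a b s t, f z = (∫ r in a..b, r * g r) * ∫ φ in s..t, h φ := by
  have hD : MeasurableSet (Ioo a b ×ˢ Ioo s t) := measurableSet_Ioo.prod measurableSet_Ioo
  calc ∫ z in annularSector a b s t, f z
      = ∫ p in Ioo a b ×ˢ Ioo s t, |p.1| • f (polarVec p) :=
        setIntegral_polarVec_image hD (injOn_polarVec_Ioo_prod_Ioo ha hst') f
    _ = ∫ p in Ioo a b ×ˢ Ioo s t, p.1 * g p.1 * h p.2 :=
        setIntegral_congr_fun hD fun p hp ↦ by
          simp only [abs_of_pos (ha.trans_lt hp.1.1), hf p.1 p.2, smul_eq_mul, mul_assoc]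
    _ = (∫ r in a..b, r * g r) * ∫ φ in s..t, h φ := by
        rw [Measure.volume_eq_prod, setIntegral_prod_mul (fun r ↦ r * g r) h,
          intervalIntegral.integral_of_le hab, intervalIntegral.integral_of_le hst,
          integral_Ioc_eq_integral_Ioo, integral_Ioc_eq_integral_Ioo]

lemma volume_real_annularSector (ha : 0 ≤ a) (hab : a ≤ b) (hst : s ≤ t)
    (hst' : t - s ≤ 2 * Real.pi) :
    volume.real (annularSector a b s t) = (b ^ 2 - a ^ 2) / 2 * (t - s) := by
  have h := setIntegral_annularSector_of_eq_mul (f := fun _ ↦ 1) (g := fun _ ↦ 1) (h := fun _ ↦ 1)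
    ha hab hst hst' fun _ _ ↦ (one_mul 1).symm
  simpa using h

lemma setIntegral_inner_annularSector (ha : 0 ≤ a) (hab : a ≤ b) (hst : s ≤ t)
    (hst' : t - s ≤ 2 * Real.pi) (ψ : ℝ) :
    ∫ z in annularSector a b s t, ⟪polarVec (1, ψ), z⟫_ℝ =
      (b ^ 3 - a ^ 3) / 3 * (Real.sin (ψ - s) - Real.sin (ψ - t)) := by
  have hcube : ∫ r in a..b, r * r = (b ^ 3 - a ^ 3) / 3 := by
    simp only [← sq, integral_pow]
    norm_num
  rw [setIntegral_annularSector_of_eq_mul (g := fun r ↦ r) (h := fun φ ↦ Real.cos (ψ - φ)) ha hab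
      hst hst' fun r φ ↦ by rw [inner_polarVec, one_mul],
    hcube, intervalIntegral.integral_comp_sub_left, integral_cos]

lemma isProbabilityMeasure_normRestrict_annularSector (ha : 0 ≤ a) (hab : a < b) (hst : s < t)
    (hst' : t - s ≤ 2 * Real.pi) : IsProbabilityMeasure (normRestrict (annularSector a b s t)) := by
  have hpos : 0 < volume.real (annularSector a b s t) := by
    rw [volume_real_annularSector ha hab.le hst.le hst']
    have : a ^ 2 < b ^ 2 := by gcongr
    exact mul_pos (by linarith) (sub_pos.2 hst)
  exact isProbabilityMeasure_normRestrict (fun h ↦ hpos.ne' (by simp [Measure.real, h]))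
    (isBounded_annularSector a b s t).measure_lt_top.ne

lemma reflection_polarVec (r φ ψ : ℝ) :
    (ℝ ∙ polarVec (1, ψ - Real.pi / 2))ᗮ.reflection (polarVec (r, φ)) =
      polarVec (r, 2 * ψ - φ) := by
  obtain ⟨χ, rfl⟩ : ∃ χ, φ = ψ - χ := ⟨ψ - φ, (sub_sub_cancel ψ φ).symm⟩
  have hangle : 2 * ψ - (ψ - χ) = ψ + χ := by ring
  have hinner : ⟪polarVec (1, ψ - Real.pi / 2), polarVec (r, ψ - χ)⟫_ℝ = r * Real.sin χ := by
    rw [inner_polarVec, one_mul, sub_sub_sub_cancel_left, Real.cos_sub_pi_div_two]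
  rw [reflection_orthogonal_singleton_apply (by simp [norm_polarVec]), hinner, hangle]
  ext i
  fin_cases i
  · simp only [Fin.zero_eta, PiLp.sub_apply, PiLp.smul_apply, smul_eq_mul, polarVec_apply_zero,
      Real.cos_pi_div_two, Real.sin_pi_div_two, Real.cos_sub, Real.cos_add]
    ring
  · simp only [Fin.mk_one, PiLp.sub_apply, PiLp.smul_apply, smul_eq_mul, polarVec_apply_one,
      Real.cos_pi_div_two, Real.sin_pi_div_two, Real.sin_sub, Real.sin_add]
    ring

lemma reflection_image_annularSector (a b s t ψ : ℝ) :
    (ℝ ∙ polarVec (1, ψ - Real.pi / 2))ᗮ.reflection '' annularSector a b s t =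
      annularSector a b (2 * ψ - t) (2 * ψ - s) := by
  have hcomp : (ℝ ∙ polarVec (1, ψ - Real.pi / 2))ᗮ.reflection ∘ polarVec =
      polarVec ∘ Prod.map id (2 * ψ - ·) :=
    funext fun p ↦ reflection_polarVec p.1 p.2 ψ
  rw [annularSector, ← image_comp, hcomp, image_comp, prodMap_image_prod, image_id,
    image_const_sub_Ioo, annularSector]

lemma inner_nonneg_of_mem_annularSector {ψ : ℝ} (ha : 0 ≤ a) (hs : ψ - Real.pi / 2 ≤ s)
    (ht : t ≤ ψ + Real.pi / 2) {z : EuclideanSpace ℝ (Fin 2)} (hz : z ∈ annularSector a b s t) :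
    0 ≤ ⟪polarVec (1, ψ), z⟫_ℝ := by
  obtain ⟨⟨r, φ⟩, ⟨⟨har, -⟩, hsφ, hφt⟩, rfl⟩ := hz
  rw [inner_polarVec, one_mul]
  simp only at har hsφ hφt
  exact mul_nonneg (by linarith)
    (Real.cos_nonneg_of_neg_pi_div_two_le_of_le (by linarith) (by linarith))

theorem integral_inner_normRestrict_annularSector (ha : 0 ≤ a) (hab : a < b) (hst : s < t)
    (hst' : t - s ≤ 2 * Real.pi) (ψ : ℝ) :
    ∫ z, ⟪polarVec (1, ψ), z⟫_ℝ ∂normRestrict (annularSector a b s t) =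
      2 * (b ^ 3 - a ^ 3) / (3 * (b ^ 2 - a ^ 2)) *
        ((Real.sin (ψ - s) - Real.sin (ψ - t)) / (t - s)) := by
  have hb : b ^ 2 - a ^ 2 ≠ 0 := (sub_pos.2 (by gcongr)).ne'
  have ht : t - s ≠ 0 := (sub_pos.2 hst).ne'
  rw [integral_normRestrict, volume_real_annularSector ha hab.le hst.le hst',
    setIntegral_inner_annularSector ha hab.le hst.le hst', smul_eq_mul]
  field_simp

theorem W1_normRestrict_annularSector {α β c : ℝ} (ha : 0 ≤ a) (hab : a < b) (hc : 0 < c)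
    (hc₁ : c ≤ (β - α) / 2) (hc₂ : (β - α) / 2 + c ≤ Real.pi) :
    W1 (normRestrict (annularSector a b (α - c) (α + c)))
        (normRestrict (annularSector a b (β - c) (β + c))) =
      4 * (b ^ 3 - a ^ 3) / (3 * (b ^ 2 - a ^ 2)) * Real.sin ((β - α) / 2) *
        (Real.sin c / c) := by
  set ψ := (α + β) / 2 with hψ
  set n := polarVec (1, ψ - Real.pi / 2)
  have hn : ‖n‖ = 1 := by simp [n, norm_polarVec]
  have hlt : α - c < α + c := by linarith
  have hwidth : α + c - (α - c) ≤ 2 * Real.pi := by linarith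
  have hreflect : annularSector a b (β - c) (β + c) =
      (ℝ ∙ n)ᗮ.reflection '' annularSector a b (α - c) (α + c) := by
    rw [reflection_image_annularSector, hψ]
    ring_nf
  have hprob := isProbabilityMeasure_normRestrict_annularSector ha hab hlt hwidth
  have hmeas := measurableSet_annularSector (b := b) ha hwidth
  have hpos : ∀ᵐ z ∂normRestrict (annularSector a b (α - c) (α + c)), 0 ≤ ⟪n, z⟫_ℝ :=
    (ae_mem_normRestrict hmeas).mono fun z hz ↦
      inner_nonneg_of_mem_annularSector ha (by linarith) (by linarith) hz
  have hsin : Real.sin (ψ - Real.pi / 2 - (α - c)) - Real.sin (ψ - Real.pi / 2 - (α + c)) =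
      2 * Real.sin c * Real.sin ((β - α) / 2) := by
    rw [Real.sin_sub_sin, ← Real.cos_sub_pi_div_two ((β - α) / 2), hψ]
    ring_nf
  rw [hreflect, normRestrict_image (ℝ ∙ n)ᗮ.reflection.measurePreserving
      (ℝ ∙ n)ᗮ.reflection.toHomeomorph.measurableEmbedding,
    W1_map_reflection hn (integrable_norm_normRestrict hmeas (isBounded_annularSector ..)) hpos,
    integral_inner_normRestrict_annularSector ha hab hlt hwidth, hsin]
  ring

end AnnularSector

section Circle

/-- The map `Φ` of the circle setup: tubular coordinates `(α, β)` around the circle of radius `R`,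
with `α` the arc length along the circle and `β` the distance to it, counted positive inwards. -/
noncomputable def tubularCoord (R : ℝ) (p : ℝ × ℝ) : EuclideanSpace ℝ (Fin 2) :=
  polarVec (R - p.2, p.1 / R)

/-- The test measure `μ_t^{σ,ε}` of the circle setup. -/
noncomputable def circleTestMeasure (R σ ε t : ℝ) : Measure (EuclideanSpace ℝ (Fin 2)) :=
  normRestrict (tubularCoord R '' (Ioo (t - ε) (t + ε) ×ˢ Ioo (-σ) σ))

lemma tubularCoord_image {R : ℝ} (hR : 0 < R) (σ ε t : ℝ) :
    tubularCoord R '' (Ioo (t - ε) (t + ε) ×ˢ Ioo (-σ) σ) =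
      annularSector (R - σ) (R + σ) (t / R - ε / R) (t / R + ε / R) := by
  have hcomp : tubularCoord R = polarVec ∘ Prod.map (R - ·) (· * R⁻¹) ∘ Prod.swap := rfl
  rw [hcomp, image_comp, image_comp, image_swap_prod, prodMap_image_prod, image_const_sub_Ioo,
    image_mul_right_Ioo _ _ (inv_pos.2 hR), annularSector]
  ring_nf

lemma norm_tubularCoord_sub_tubularCoord {R s t : ℝ} (hR : 0 < R) (hst : s ≤ t)
    (hst' : (t - s) / 2 ≤ Real.pi * R) :
    ‖tubularCoord R (s, 0) - tubularCoord R (t, 0)‖ = 2 * R * Real.sin ((t - s) / (2 * R)) := by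
  have hangle : (t / R - s / R) / 2 = (t - s) / (2 * R) := by field_simp
  have hsin : 0 ≤ Real.sin ((t - s) / (2 * R)) := by
    refine Real.sin_nonneg_of_nonneg_of_le_pi (div_nonneg (sub_nonneg.2 hst) (by positivity)) ?_
    rw [div_le_iff₀ (by positivity)]
    linarith
  rw [tubularCoord, tubularCoord, sub_zero, norm_polarVec_sub_polarVec, hangle, abs_of_pos hR,
    abs_of_nonneg hsin]

theorem circle_wasserstein_exact_general {R σ ε s t : ℝ} (hσ : 0 < σ) (hσR : σ ≤ R) (hε : 0 < ε)
    (hε₁ : ε ≤ (t - s) / 2) (hε₂ : (t - s) / 2 + ε ≤ Real.pi * R) :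
    W1 (circleTestMeasure R σ ε s) (circleTestMeasure R σ ε t) =
      2 * R ^ 2 * Real.sin ((t - s) / (2 * R)) * (1 / ε) * Real.sin (ε / R) *
        (1 + σ ^ 2 / (3 * R ^ 2)) ∧
    W1 (circleTestMeasure R σ ε s) (circleTestMeasure R σ ε t) =
      ‖tubularCoord R (s, 0) - tubularCoord R (t, 0)‖ * (R / ε) * Real.sin (ε / R) *
        (1 + σ ^ 2 / (3 * R ^ 2)) := by
  have hR : 0 < R := hσ.trans_le hσR
  have hangle : (t / R - s / R) / 2 = (t - s) / 2 / R := by ring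
  have hdisjoint : ε / R ≤ (t / R - s / R) / 2 := by
    rw [hangle]
    gcongr
  have hpi : (t / R - s / R) / 2 + ε / R ≤ Real.pi := by
    rwa [hangle, ← add_div, div_le_iff₀ hR]
  have hsq : (R + σ) ^ 2 - (R - σ) ^ 2 = 4 * R * σ := by ring
  have hW : W1 (circleTestMeasure R σ ε s) (circleTestMeasure R σ ε t) =
      2 * R ^ 2 * Real.sin ((t - s) / (2 * R)) * (1 / ε) * Real.sin (ε / R) *
        (1 + σ ^ 2 / (3 * R ^ 2)) := by
    rw [circleTestMeasure, circleTestMeasure, tubularCoord_image hR, tubularCoord_image hR,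
      W1_normRestrict_annularSector (sub_nonneg.2 hσR) (by linarith) (by positivity) hdisjoint hpi,
      hangle, div_div, hsq]
    field_simp
    ring
  refine ⟨hW, ?_⟩
  rw [hW, norm_tubularCoord_sub_tubularCoord hR (by linarith) (by linarith)]
  ring

end Circle

/-- Exact Wasserstein distance between two test measures on an annular neighbourhood of a
circle of radius `R`. -/
theorem circle_wasserstein_exact
    (R : ℝ) (hR : 0 < R)
    (Φ : ℝ × ℝ → EuclideanSpace ℝ (Fin 2))
    (hΦ : ∀ p : ℝ × ℝ, Φ p = (WithLp.equiv 2 (Fin 2 → ℝ)).symm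
      ![(R - p.2) * Real.cos (p.1 / R), (R - p.2) * Real.sin (p.1 / R)])
    (μ : ℝ → ℝ → ℝ → Measure (EuclideanSpace ℝ (Fin 2)))
    (hμ : ∀ t σ ε : ℝ, μ t σ ε = normRestrict (Φ '' (Ioo (t - ε) (t + ε) ×ˢ Ioo (-σ) σ))) :
    ∀ δ ∈ Ioc (0:ℝ) (Real.pi * R), ∀ σ ε : ℝ, 0 < σ → 0 < ε →
      max σ ε ≤ δ / 2 → σ < R →
      W1 (μ 0 σ ε) (μ δ σ ε) =
        2 * R ^ 2 * Real.sin (δ / (2 * R)) * (1 / ε) * Real.sin (ε / R) *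
          (1 + σ ^ 2 / (3 * R ^ 2)) ∧
      W1 (μ 0 σ ε) (μ δ σ ε) =
        ‖Φ (0, 0) - Φ (δ, 0)‖ * (R / ε) * Real.sin (ε / R) *
          (1 + σ ^ 2 / (3 * R ^ 2)) := by
  intro δ ⟨_, hδ⟩ σ ε hσ hε hmax hσR
  have hεδ : ε ≤ δ / 2 := (le_max_right σ ε).trans hmax
  obtain rfl : Φ = tubularCoord R := funext hΦ
  simp only [hμ]
  simpa only [circleTestMeasure, sub_zero] using
    circle_wasserstein_exact_general (s := 0) (t := δ) hσ hσR.le hε (by linarith) (by linarith)
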